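/- Let C > 0, let k be a positive natural number, let σ > 0, ε ≥ 0, and δ ∈ [0,1], and let Φ denote the cumulative distribution function of the standard Gaussian on ℝ. Suppose Φ(C/σ − εσ/(2C)) − e^ε · Φ(−C/σ − εσ/(2C)) ≤ δ (the Analytic Gaussian Mechanism condition with sensitivity Δ = 2C). Let (r₁, …, r_k) and (r′₁, …, r′_k) be two families of real numbers with |rᵢ| ≤ C/k and |r′ᵢ| ≤ C/k for every i, and set H = Σ_{i=1}^k rᵢ and H′ = Σ_{i=1}^k r′ᵢ. Then the Gaussian measures N(H, σ²) and N(H′, σ²) on ℝ satisfy the (ε, δ)-DP inequality: for every Borel set O ⊆ ℝ, N(H, σ²)(O) ≤ e^ε · N(H′, σ²)(O) + δ. -/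

import Mathlib

/-!
By an affine change of variables `x ↦ c * x + H'` with `c = ± σ` (the sign chosen according to
that of `H - H'`), the two Gaussians become `N(a, 1)` and `N(0, 1)` with
`0 ≤ a = |H - H'| / σ ≤ D := 2 * C / σ`.

The Neyman–Pearson argument (`gaussian_neyman_pearson`) says that `N(a, 1)(S) - e^ε * N(0, 1)(S)`
is maximised over `S` by the set where the likelihood ratio is at least `e^ε`, which for `a > 0` is
the half-line `[a / 2 + ε / a, ∞)`. Monotonicity of the bound in `a` requires no
differentiation: on a fixed half-line `[t, ∞)`, moving the mean from `a` up to `D` only increases the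
first term, and the resulting quantity is bounded by applying Neyman–Pearson once more, with mean
`D` (`gaussian_dp_of_le`). For mean `D` the optimal value is exactly the left-hand side of the
analytic Gaussian mechanism condition. When `a = 0` the measures coincide and `ε ≥ 0` suffices.
-/

open MeasureTheory ProbabilityTheory

/-- The cumulative distribution function of the standard Gaussian on `ℝ`:
`Φ(t) = (1/√(2π)) ∫_{−∞}^t e^{−x²/2} dx`. -/
noncomputable def stdGaussianCDF (t : ℝ) : ℝ :=
  (1 / Real.sqrt (2 * Real.pi)) * ∫ x in Set.Iic t, Real.exp (-x ^ 2 / 2)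


lemma stdGaussianCDF_eq_real (t : ℝ) :
    stdGaussianCDF t = (gaussianReal 0 1).real (Set.Iic t) := by
  have h0 : 0 ≤ ∫ x in Set.Iic t, gaussianPDFReal 0 1 x :=
    integral_nonneg fun x => gaussianPDFReal_nonneg 0 1 x
  rw [measureReal_def, gaussianReal_apply_eq_integral 0 one_ne_zero, ENNReal.toReal_ofReal h0,
    stdGaussianCDF, ← integral_const_mul]
  simp [gaussianPDFReal]

lemma stdGaussianCDF_mono : Monotone stdGaussianCDF := by
  intro s t hst
  rw [stdGaussianCDF_eq_real, stdGaussianCDF_eq_real]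
  exact measureReal_mono (Set.Iic_subset_Iic.2 hst)

lemma gaussianReal_real_Ici (m t : ℝ) :
    (gaussianReal m 1).real (Set.Ici t) = stdGaussianCDF (m - t) := by
  have h := gaussianReal_map_const_sub (μ := 0) (v := 1) m
  rw [sub_zero] at h
  rw [stdGaussianCDF_eq_real, ← h,
    map_measureReal_apply (by fun_prop) measurableSet_Ici]
  congr 1
  ext x
  simp only [Set.mem_preimage, Set.mem_Ici, Set.mem_Iic]
  constructor <;> intro h <;> linarith

lemma gaussianReal_real_eq_setIntegral (m : ℝ) (S : Set ℝ) :
    (gaussianReal m 1).real S = ∫ x in S, gaussianPDFReal m 1 x := by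
  rw [measureReal_def, gaussianReal_apply_eq_integral m one_ne_zero, ENNReal.toReal_ofReal]
  exact integral_nonneg fun x => gaussianPDFReal_nonneg m 1 x

/-- The set where the likelihood ratio of `N(a, 1)` to `N(0, 1)` is at least `e^ε`. -/
lemma gaussian_likelihoodRatio_set {a : ℝ} (ha : 0 < a) (ε : ℝ) :
    {x : ℝ | 0 ≤ gaussianPDFReal a 1 x - Real.exp ε * gaussianPDFReal 0 1 x} =
      Set.Ici (a / 2 + ε / a) := by
  ext x
  have hc : 0 < (√(2 * Real.pi))⁻¹ := by positivity
  have key : gaussianPDFReal a 1 x - Real.exp ε * gaussianPDFReal 0 1 x =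
      (√(2 * Real.pi))⁻¹ * (Real.exp (-(x - a) ^ 2 / 2) - Real.exp (ε + -x ^ 2 / 2)) := by
    rw [Real.exp_add]
    simp [gaussianPDFReal]
    ring
  rw [Set.mem_ofPred_eq, key, mul_nonneg_iff_of_pos_left hc, sub_nonneg, Real.exp_le_exp,
    Set.mem_Ici]
  have h2 : a / 2 + ε / a = (a ^ 2 / 2 + ε) / a := by field_simp
  rw [h2, div_le_iff₀ ha]
  constructor <;> intro h <;> linarith

/-- The half-line `[a / 2 + ε / a, ∞)` maximises `S ↦ N(a, 1)(S) - e^ε * N(0, 1)(S)`; the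
right-hand side is the value attained there. -/
lemma gaussian_neyman_pearson {a : ℝ} (ha : 0 < a) (ε : ℝ) {S : Set ℝ} (hS : MeasurableSet S) :
    (gaussianReal a 1).real S - Real.exp ε * (gaussianReal 0 1).real S ≤
      stdGaussianCDF (a / 2 - ε / a) - Real.exp ε * stdGaussianCDF (-(a / 2) - ε / a) := by
  have hf := integrable_gaussianPDFReal a 1
  have hg := (integrable_gaussianPDFReal 0 1).const_mul (Real.exp ε)
  have split : ∀ T : Set ℝ,
      ∫ x in T, (gaussianPDFReal a 1 x - Real.exp ε * gaussianPDFReal 0 1 x) =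
        (gaussianReal a 1).real T - Real.exp ε * (gaussianReal 0 1).real T := by
    intro T
    rw [integral_sub hf.integrableOn hg.integrableOn, integral_const_mul,
      gaussianReal_real_eq_setIntegral, gaussianReal_real_eq_setIntegral]
  have h := setIntegral_le_nonneg hS
    ((stronglyMeasurable_gaussianPDFReal a 1).sub
      ((stronglyMeasurable_gaussianPDFReal 0 1).const_mul (Real.exp ε))) (hf.sub hg)
  simp only [Pi.sub_apply] at h
  rw [gaussian_likelihoodRatio_set ha, split, split, gaussianReal_real_Ici,
    gaussianReal_real_Ici] at h
  convert h using 3 <;> ring_nf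

/-- The optimal bound for mean `D` also serves for every mean `a` with `0 < a ≤ D`. -/
lemma gaussian_dp_of_le {a D : ℝ} (ha : 0 < a) (haD : a ≤ D) (ε : ℝ) {S : Set ℝ}
    (hS : MeasurableSet S) :
    (gaussianReal a 1).real S - Real.exp ε * (gaussianReal 0 1).real S ≤
      stdGaussianCDF (D / 2 - ε / D) - Real.exp ε * stdGaussianCDF (-(D / 2) - ε / D) := by
  -- `t` is the Neyman–Pearson threshold for `a`; it is a suboptimal one for `D`.
  set t := a / 2 + ε / a with ht
  have h1 := gaussian_neyman_pearson ha ε hS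
  have h2 := gaussian_neyman_pearson (ha.trans_le haD) ε (measurableSet_Ici (a := t))
  rw [gaussianReal_real_Ici, gaussianReal_real_Ici] at h2
  have h3 : stdGaussianCDF (a / 2 - ε / a) ≤ stdGaussianCDF (D - t) :=
    stdGaussianCDF_mono (by rw [ht]; linarith)
  have h4 : -(a / 2) - ε / a = 0 - t := by rw [ht]; ring
  rw [h4] at h1
  linarith

lemma gaussianReal_eq_map_affine (c m b : ℝ) :
    gaussianReal (c * m + b) (c ^ 2).toNNReal =
      (gaussianReal m 1).map (fun x => c * x + b) := by
  have h : (fun x : ℝ => c * x + b) = (fun x => x + b) ∘ (fun x => c * x) := rfl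
  rw [h, ← Measure.map_map (by fun_prop) (by fun_prop), gaussianReal_map_const_mul,
    gaussianReal_map_add_const]
  congr 1
  ext
  simp [sq_nonneg]

lemma abs_sum_le_of_abs_le_div {C : ℝ} {k : ℕ} (hk : 0 < k) {r : Fin k → ℝ}
    (hr : ∀ i, |r i| ≤ C / k) : |∑ i, r i| ≤ C := by
  have hk' : (k : ℝ) ≠ 0 := by positivity
  calc |∑ i, r i| ≤ ∑ i, |r i| := Finset.abs_sum_le_sum_abs _ _
    _ ≤ ∑ _i : Fin k, C / k := Finset.sum_le_sum fun i _ => hr i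
    _ = C := by simp; field_simp

/-- Single-step privacy guarantee of SplitAvg: if the Analytic Gaussian Mechanism
condition holds with sensitivity `Δ = 2C`, i.e.
`Φ(C/σ − εσ/(2C)) − e^ε·Φ(−C/σ − εσ/(2C)) ≤ δ`, and `(r₁, …, r_k)`, `(r′₁, …, r′_k)`
are families of reals with `|rᵢ| ≤ C/k` and `|r′ᵢ| ≤ C/k`, then with `H = Σᵢ rᵢ` and
`H′ = Σᵢ r′ᵢ`, the Gaussian measures `N(H, σ²)` and `N(H′, σ²)` satisfy the
`(ε, δ)`-DP inequality. -/
theorem splitavg_single_step_dp (C : ℝ) (hC : 0 < C) (k : ℕ) (hk : 0 < k)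
    (σ ε δ : ℝ) (hσ : 0 < σ) (hε : 0 ≤ ε) (hδ : δ ∈ Set.Icc (0 : ℝ) 1)
    (hcond : stdGaussianCDF (C / σ - ε * σ / (2 * C)) -
      Real.exp ε * stdGaussianCDF (-(C / σ) - ε * σ / (2 * C)) ≤ δ)
    (r r' : Fin k → ℝ) (hr : ∀ i, |r i| ≤ C / k) (hr' : ∀ i, |r' i| ≤ C / k) :
    ∀ O : Set ℝ, MeasurableSet O →
      gaussianReal (∑ i, r i) ((σ ^ 2).toNNReal) O ≤
        ENNReal.ofReal (Real.exp ε) *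
          gaussianReal (∑ i, r' i) ((σ ^ 2).toNNReal) O + ENNReal.ofReal δ := by
  intro O hO
  have hH := abs_le.1 (abs_sum_le_of_abs_le_div hk hr)
  have hH' := abs_le.1 (abs_sum_le_of_abs_le_div hk hr')
  generalize ∑ i, r i = H at hH ⊢
  generalize ∑ i, r' i = H' at hH' ⊢
  rcases eq_or_ne H H' with rfl | hne
  -- Equal means: `1 ≤ e^ε` suffices.
  · calc gaussianReal H ((σ ^ 2).toNNReal) O
        = 1 * gaussianReal H ((σ ^ 2).toNNReal) O := (one_mul _).symm
      _ ≤ ENNReal.ofReal (Real.exp ε) * gaussianReal H ((σ ^ 2).toNNReal) O := by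
          gcongr
          rw [ENNReal.one_le_ofReal]
          exact Real.one_le_exp hε
      _ ≤ _ := le_self_add
  -- The scale `c = ± σ` is chosen so that the normalised difference of means is positive.
  · obtain ⟨c, hc0, hc2, ha, haD⟩ : ∃ c : ℝ, c ≠ 0 ∧ c ^ 2 = σ ^ 2 ∧ 0 < (H - H') / c ∧
        (H - H') / c ≤ 2 * C / σ := by
      rcases lt_or_gt_of_ne hne with hlt | hlt
      · have e : (H - H') / -σ = (H' - H) / σ := by field_simp; ring
        refine ⟨-σ, neg_ne_zero.2 hσ.ne', by ring, ?_, ?_⟩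
        · rw [e]; exact div_pos (by linarith) hσ
        · rw [e]; gcongr; linarith
      · refine ⟨σ, hσ.ne', rfl, div_pos (by linarith) hσ, ?_⟩
        gcongr; linarith
    have hφ : Measurable fun x : ℝ => c * x + H' := by fun_prop
    have e1 := gaussianReal_eq_map_affine c ((H - H') / c) H'
    have e2 := gaussianReal_eq_map_affine c 0 H'
    rw [mul_div_cancel₀ _ hc0, sub_add_cancel] at e1
    rw [mul_zero, zero_add] at e2
    rw [← hc2, e1, e2, Measure.map_apply hφ hO, Measure.map_apply hφ hO]
    have h := gaussian_dp_of_le ha haD ε (hφ hO)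
    have d1 : 2 * C / σ / 2 = C / σ := by ring
    have d2 : ε / (2 * C / σ) = ε * σ / (2 * C) := by field_simp
    rw [d1, d2] at h
    rw [← ofReal_measureReal, ← ofReal_measureReal (μ := gaussianReal 0 1),
      ← ENNReal.ofReal_mul (Real.exp_nonneg ε),
      ← ENNReal.ofReal_add (by positivity) hδ.1]
    exact ENNReal.ofReal_le_ofReal (by linarith)
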